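/- In the simplified model, there are constants C > 0 and N such that for all n ≥ N and all 2 ≤ i ≤ m − 1, the pre-averaged Brownian parts on adjacent blocks satisfy |E[X̄_{i,m} X̄_{i+1,m}] − (σ²/m)∫₀¹ Λ(u)Λ(1−u) du| ≤ C/n, uniformly in i. -/

import Mathlib

open MeasureTheory ProbabilityTheory Real

noncomputable section

/-- `Λ(u) = -∫₀ᵘ λ(v) dv`. -/
def bigLam (lam : ℝ → ℝ) (u : ℝ) : ℝ := -∫ v in (0:ℝ)..u, lam v

/-- A (normalized) pre-average function: piecewise Lipschitz on `[0,2]`,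
antisymmetric about `1`, and normalized. -/
structure IsPreAverageFn (lam : ℝ → ℝ) : Prop where
  piecewise_lipschitz : ∃ (N : ℕ) (t : ℕ → ℝ) (K : NNReal),
      0 < N ∧ t 0 = 0 ∧ t N = 2 ∧ (∀ i < N, t i < t (i + 1)) ∧
      ∀ i < N, LipschitzOnWith K lam (Set.Ioo (t i) (t (i + 1)))
  antisymm : ∀ t ∈ Set.Icc (0:ℝ) 1, lam t = - lam (2 - t)
  normalized : Real.sqrt (2 * ∫ s in (0:ℝ)..1, (∫ u in (0:ℝ)..s, lam u) ^ 2) = 1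

/-- `m = n / ⌊√n / c⌋`. -/
def mOf (c : ℝ) (n : ℕ) : ℕ := n / ⌊Real.sqrt n / c⌋₊

/-- The indices `j` with `j/n ∈ [(i-2)/m , i/m]`. -/
def blockIdx (n m i : ℕ) : Finset ℕ :=
  (Finset.range (n + 1)).filter fun j =>
    ((i : ℝ) - 2) / m ≤ (j : ℝ) / n ∧ (j : ℝ) / n ≤ (i : ℝ) / m

variable {Ω : Type*}

/-- Pre-averaged value `Ā_{i,m} = (m/n) ∑_{j/n ∈ [(i-2)/m, i/m]} λ(m j/n - (i-2)) A_j`. -/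
def preAvg (lam : ℝ → ℝ) (n m : ℕ) (A : ℕ → Ω → ℝ) (i : ℕ) (ω : Ω) : ℝ :=
  ((m : ℝ) / n) * ∑ j ∈ blockIdx n m i,
    lam ((m : ℝ) * j / n - ((i : ℝ) - 2)) * A j ω

/-- Bias correction `𝔟(λ, A)_{i,m}`. -/
def biasCorr (lam : ℝ → ℝ) (n m : ℕ) (A : ℕ → Ω → ℝ) (i : ℕ) (ω : Ω) : ℝ :=
  ((m : ℝ) ^ 2 / (2 * (n : ℝ) ^ 2)) * ∑ j ∈ (blockIdx n m i).filter (fun j => 1 ≤ j),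
    (lam ((m : ℝ) * j / n - ((i : ℝ) - 2))) ^ 2 * (A j ω - A (j - 1) ω) ^ 2

/-- The simplified model: `(W_{j/n})_j` and `(η_{j,n})_j` form a centered jointly Gaussian
family with `Cov(W_{j/n}, W_{l/n}) = min(j,l)/n`, `(η_{j,n})` standard Gaussian i.i.d.
and uncorrelated with the `W` grid values. -/
def IsSimplifiedModel [MeasureSpace Ω] (n : ℕ) (W η : ℕ → Ω → ℝ) : Prop :=
  (∀ j, Measurable (W j)) ∧ (∀ j, Measurable (η j)) ∧
  (∀ a b : ℕ → ℝ, ∃ v : NNReal,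
    Measure.map (fun ω => ∑ j ∈ Finset.range (n + 1), (a j * W j ω + b j * η j ω)) ℙ
      = gaussianReal 0 v) ∧
  (∀ j l, j ≤ n → l ≤ n → ∫ ω, W j ω * W l ω = (min j l : ℝ) / n) ∧
  (∀ j l, j ≤ n → l ≤ n → ∫ ω, η j ω * η l ω = if j = l then 1 else 0) ∧
  (∀ j l, j ≤ n → l ≤ n → ∫ ω, W j ω * η l ω = 0)

/-- The observations `Y_{j,n} = σ W_{j/n} + τ η_{j,n}`. -/
def obs (σ τ : ℝ) (W η : ℕ → Ω → ℝ) (j : ℕ) (ω : Ω) : ℝ := σ * W j ω + τ * η j ω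

end

/-!
The Brownian motion enters only through its covariance. With `h = m / n`, the number `min j l / n`
is `1 / m` times the inner product of `1_{[0, h j]}` and `1_{[0, h l]}` in `L²(0, m)`. Hence the
covariance of two pre-averages is `σ² / m` times `∫₀ᵐ` of the product of the tail sums
`s ↦ h ∑_{h j ≥ s} λ(h j - a)` with `a = i - 2` and with `a = i - 1`.

Since `λ` has bounded variation, such a tail sum is within `O(h)` of `∫ₛ^∞ λ(x - a) dx`, uniformly
in `s` and `a`; by antisymmetry this integral is `Λ(s - a)`, where `Λ` vanishes off `[0, 2]` and is
symmetric about `1`. Two adjacent translates of `Λ` overlap in an interval of length one, on which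
the reflection turns the integral of their product into `∫₀¹ Λ(u) Λ(1 - u) du`. The total error is
`(σ² / m) (O(h) + O(h²) m) = O(1 / n)` because `m² = O(n)`.
-/

section BoundedVariation

variable {α : Type*} [LinearOrder α]

theorem boundedVariationOn_add {E : Type*} [SeminormedAddCommGroup E] {f g : α → E} {s : Set α}
    (hf : BoundedVariationOn f s) (hg : BoundedVariationOn g s) : BoundedVariationOn (f + g) s := by
  refine ne_top_of_le_ne_top (ENNReal.add_ne_top.2 ⟨hf, hg⟩) (iSup_le fun ⟨n, u, hu, us⟩ => ?_)
  calc ∑ k ∈ Finset.range n, edist ((f + g) (u (k + 1))) ((f + g) (u k))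
      ≤ ∑ k ∈ Finset.range n,
          (edist (f (u (k + 1))) (f (u k)) + edist (g (u (k + 1))) (g (u k))) :=
        Finset.sum_le_sum fun k _ => edist_add_add_le _ _ _ _
    _ = ∑ k ∈ Finset.range n, edist (f (u (k + 1))) (f (u k))
          + ∑ k ∈ Finset.range n, edist (g (u (k + 1))) (g (u k)) := Finset.sum_add_distrib
    _ ≤ eVariationOn f s + eVariationOn g s :=
        add_le_add (eVariationOn.sum_le hu us) (eVariationOn.sum_le hu us)

theorem boundedVariationOn_indicator_one_of_isUpperSet {s : Set α} (hs : IsUpperSet s)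
    (t : Set α) : BoundedVariationOn (s.indicator (1 : α → ℝ)) t := by
  have hmono : Monotone (s.indicator (1 : α → ℝ)) := fun x y hxy => by
    by_cases hx : x ∈ s
    · simp [hx, hs hxy hx]
    · rw [Set.indicator_of_notMem hx]
      exact Set.indicator_nonneg (fun _ _ => zero_le_one) y
  refine (hmono.monotoneOn t).boundedVariationOn (C := 1) fun x _ => ?_
  by_cases hx : x ∈ s <;> simp [hx]

theorem boundedVariationOn_indicator_one_of_isLowerSet {s : Set α} (hs : IsLowerSet s)
    (t : Set α) : BoundedVariationOn (s.indicator (1 : α → ℝ)) t := by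
  have hcompl : s.indicator (1 : α → ℝ) = (fun r => 1 - r) ∘ sᶜ.indicator (1 : α → ℝ) := by
    ext x
    by_cases hx : x ∈ s <;> simp [hx]
  rw [hcompl]
  exact (IsometryEquiv.subLeft (1 : ℝ)).isometry.lipschitz.comp_boundedVariationOn
    (boundedVariationOn_indicator_one_of_isUpperSet hs.compl t)

theorem boundedVariationOn_indicator_Icc {f : α → ℝ} {a b : α} (hab : a ≤ b)
    (hf : BoundedVariationOn f (Set.Icc a b)) :
    BoundedVariationOn ((Set.Icc a b).indicator f) Set.univ := by
  have hclamp : BoundedVariationOn (f ∘ fun x => max a (min b x)) Set.univ :=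
    ne_top_of_le_ne_top hf <| eVariationOn.comp_le_of_monotoneOn f _
      (fun x _ y _ hxy => max_le_max_left a (min_le_min_left b hxy))
      fun x _ => ⟨le_max_left a _, max_le hab (min_le_left b x)⟩
  have hprod : (Set.Icc a b).indicator f = (Set.Ici a).indicator (1 : α → ℝ) *
      (Set.Iic b).indicator (1 : α → ℝ) * (f ∘ fun x => max a (min b x)) := by
    ext x
    by_cases hax : a ≤ x <;> by_cases hxb : x ≤ b <;> simp [Set.indicator, hax, hxb]
  rw [hprod]
  exact ((boundedVariationOn_indicator_one_of_isUpperSet (isUpperSet_Ici a) _).mul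
    (boundedVariationOn_indicator_one_of_isLowerSet (isLowerSet_Iic b) _)).mul hclamp

theorem boundedVariationOn_Icc_of_partition {E : Type*} [PseudoEMetricSpace E] {f : α → E}
    {t : ℕ → α} {N : ℕ} (ht : ∀ i < N, t i ≤ t (i + 1))
    (hf : ∀ i < N, BoundedVariationOn f (Set.Icc (t i) (t (i + 1)))) :
    BoundedVariationOn f (Set.Icc (t 0) (t N)) := by
  suffices t 0 ≤ t N ∧ BoundedVariationOn f (Set.Icc (t 0) (t N)) from this.2
  induction N with
  | zero => exact ⟨le_rfl, .of_subsingleton (by simp)⟩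
  | succ N ih =>
    obtain ⟨h0N, hfN⟩ := ih (fun i hi => ht i (by lia)) fun i hi => hf i (by lia)
    have hadd := eVariationOn.Icc_add_Icc f (s := Set.univ) h0N (ht N N.lt_succ_self) trivial
    simp only [Set.univ_inter] at hadd
    refine ⟨h0N.trans (ht N N.lt_succ_self), ?_⟩
    rw [BoundedVariationOn, ← hadd]
    exact ENNReal.add_ne_top.2 ⟨hfN, hf N N.lt_succ_self⟩

theorem boundedVariationOn_Icc_of_lipschitzOnWith_Ioo {f : ℝ → ℝ} {a b : ℝ} {K : NNReal}
    (hf : LipschitzOnWith K f (Set.Ioo a b)) : BoundedVariationOn f (Set.Icc a b) := by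
  rcases le_or_gt b a with hba | hab
  · exact .of_subsingleton (Set.subsingleton_Icc_of_ge hba)
  obtain ⟨g, hg, hfg⟩ := hf.extend_real
  have hpoint (x : ℝ) : BoundedVariationOn ((Set.Icc x x).indicator (f - g)) (Set.Icc a b) :=
    (boundedVariationOn_indicator_Icc le_rfl (.of_subsingleton (by simp))).mono (Set.subset_univ _)
  have hgBV : BoundedVariationOn g (Set.Icc a b) := by
    simpa using hg.locallyBoundedVariationOn (Set.Icc a b) a b
      (Set.left_mem_Icc.2 hab.le) (Set.right_mem_Icc.2 hab.le)
  refine (eVariationOn.congr fun x hx => ?_).trans_ne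
    (boundedVariationOn_add (boundedVariationOn_add hgBV (hpoint a)) (hpoint b))
  rcases hx.1.eq_or_lt with rfl | hax
  · simp [hab.ne]
  rcases hx.2.eq_or_lt with rfl | hxb
  · simp [hab.ne']
  · simp [hax.ne', hxb.ne, hfg ⟨hax, hxb⟩]

theorem IsPreAverageFn.boundedVariationOn {lam : ℝ → ℝ} (hlam : IsPreAverageFn lam) :
    BoundedVariationOn lam (Set.Icc 0 2) := by
  obtain ⟨N, t, K, -, ht0, htN, ht, hlip⟩ := hlam.piecewise_lipschitz
  rw [← ht0, ← htN]
  exact boundedVariationOn_Icc_of_partition (fun i hi => (ht i hi).le)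
    fun i hi => boundedVariationOn_Icc_of_lipschitzOnWith_Ioo (hlip i hi)

theorem intervalIntegrable_of_boundedVariationOn {f : ℝ → ℝ} {a b : ℝ}
    (hf : BoundedVariationOn f (Set.uIcc a b)) : IntervalIntegrable f volume a b := by
  obtain ⟨p, q, hp, hq, rfl⟩ := hf.locallyBoundedVariationOn.exists_monotoneOn_sub_monotoneOn
  exact hp.intervalIntegrable.sub hq.intervalIntegrable

end BoundedVariation

section RiemannSum

theorem abs_mul_sub_integral_le_mul_eVariationOn {f : ℝ → ℝ} {a b : ℝ} (hab : a ≤ b)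
    (hf : BoundedVariationOn f (Set.Icc a b)) :
    |(b - a) * f a - ∫ x in a..b, f x| ≤ (b - a) * (eVariationOn f (Set.Icc a b)).toReal := by
  have hint : IntervalIntegrable f volume a b :=
    intervalIntegrable_of_boundedVariationOn (by rwa [Set.uIcc_of_le hab])
  have hdiff : (b - a) * f a - ∫ x in a..b, f x = ∫ x in a..b, (f a - f x) := by
    rw [intervalIntegral.integral_sub intervalIntegrable_const hint,
      intervalIntegral.integral_const, smul_eq_mul]
  rw [hdiff, mul_comm, ← abs_of_nonneg (sub_nonneg.2 hab), ← norm_eq_abs]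
  refine intervalIntegral.norm_integral_le_of_norm_le_const fun x hx => ?_
  rw [Set.uIoc_of_le hab] at hx
  exact hf.dist_le (Set.left_mem_Icc.2 hab) (Set.Ioc_subset_Icc_self hx)

theorem abs_sum_sub_integral_le_mul_eVariationOn {f : ℝ → ℝ} {x : ℕ → ℝ} {N : ℕ} {h : ℝ}
    (hx : Monotone x) (hmesh : ∀ k < N, x (k + 1) - x k ≤ h)
    (hf : BoundedVariationOn f (Set.Icc (x 0) (x N))) :
    |∑ k ∈ Finset.range N, (x (k + 1) - x k) * f (x k) - ∫ y in x 0..x N, f y| ≤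
      h * (eVariationOn f (Set.Icc (x 0) (x N))).toReal := by
  have hcell (k : ℕ) (hk : k < N) : BoundedVariationOn f (Set.Icc (x k) (x (k + 1))) :=
    hf.mono (Set.Icc_subset_Icc (hx k.zero_le) (hx hk))
  have hint (k : ℕ) (hk : k < N) : IntervalIntegrable f volume (x k) (x (k + 1)) :=
    intervalIntegrable_of_boundedVariationOn <| by
      rw [Set.uIcc_of_le (hx k.le_succ)]; exact hcell k hk
  calc |∑ k ∈ Finset.range N, (x (k + 1) - x k) * f (x k) - ∫ y in x 0..x N, f y|
      = |∑ k ∈ Finset.range N,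
          ((x (k + 1) - x k) * f (x k) - ∫ y in x k..x (k + 1), f y)| := by
        rw [Finset.sum_sub_distrib, intervalIntegral.sum_integral_adjacent_intervals hint]
    _ ≤ ∑ k ∈ Finset.range N, h * (eVariationOn f (Set.Icc (x k) (x (k + 1)))).toReal := by
        refine (Finset.abs_sum_le_sum_abs _ _).trans (Finset.sum_le_sum fun k hk => ?_)
        rw [Finset.mem_range] at hk
        exact (abs_mul_sub_integral_le_mul_eVariationOn (hx k.le_succ) (hcell k hk)).trans
          (mul_le_mul_of_nonneg_right (hmesh k hk) ENNReal.toReal_nonneg)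
    _ = h * (eVariationOn f (Set.Icc (x 0) (x N))).toReal := by
        rw [← Finset.mul_sum, ← eVariationOn.sum' f hx,
          ENNReal.toReal_sum fun k hk => hcell k (Finset.mem_range.1 hk)]

end RiemannSum

section GridSum

/-- The weighted sum `h ∑_{j ≤ n} φ(h j) A_j` of a sequence `A` over the grid `h ℕ`; the
pre-averages are of this form with `h = m / n`. -/
def gridSum (h : ℝ) (n : ℕ) (φ : ℝ → ℝ) (A : ℕ → ℝ) : ℝ :=
  h * ∑ j ∈ Finset.range (n + 1), φ (h * j) * A j

/-- The part of the Riemann sum of `φ` over the grid `h ℕ` that lies in `[s, ∞)`. It is the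
discretization of `∫ₛ φ` through which the covariances of grid sums of a Brownian motion are
expressed. -/
noncomputable def gridTail (h : ℝ) (n : ℕ) (φ : ℝ → ℝ) (s : ℝ) : ℝ :=
  gridSum h n φ fun j => (Set.Iic (h * j)).indicator 1 s

variable {h : ℝ} {n : ℕ} {φ : ℝ → ℝ}

theorem gridTail_eq_sum_range (hh : 0 < h) (s : ℝ) :
    gridTail h n φ s =
      ∑ k ∈ Finset.range (n + 1 - ⌈s / h⌉₊), h * φ (h * (⌈s / h⌉₊ + k : ℕ)) := by
  have hfilter : (Finset.range (n + 1)).filter (fun j : ℕ => s ≤ h * j) =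
      Finset.Ico ⌈s / h⌉₊ (n + 1) := by
    ext j
    simp only [Finset.mem_filter, Finset.mem_range, Finset.mem_Ico, Nat.ceil_le, div_le_iff₀' hh]
    exact and_comm
  simp only [gridTail, gridSum, Set.indicator_apply, Set.mem_Iic, Pi.one_apply, mul_ite, mul_one,
    mul_zero, ← Finset.sum_filter, hfilter, Finset.sum_Ico_eq_sum_range, Finset.mul_sum]

theorem abs_gridTail_sub_integral_ceil_le (hh : 0 < h) (hφ : BoundedVariationOn φ Set.univ) {s : ℝ}
    (hsn : s ≤ h * (n + 1)) :
    |gridTail h n φ s - ∫ x in h * ⌈s / h⌉₊..h * (n + 1), φ x| ≤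
      h * (eVariationOn φ Set.univ).toReal := by
  set k₀ := ⌈s / h⌉₊
  have hkn : k₀ ≤ n + 1 := Nat.ceil_le.2 ((div_le_iff₀' hh).2 (by exact_mod_cast hsn))
  have hstep (k : ℕ) : h * ((k₀ + (k + 1) : ℕ) : ℝ) - h * (k₀ + k : ℕ) = h := by
    push_cast; ring
  have hgrid := abs_sum_sub_integral_le_mul_eVariationOn (f := φ) (N := n + 1 - k₀)
    (x := fun k => h * (k₀ + k : ℕ)) (fun k l hkl => by dsimp only; gcongr)
    (fun k _ => (hstep k).le) (hφ.mono (Set.subset_univ _))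
  simp only [hstep, add_zero, Nat.add_sub_cancel' hkn] at hgrid
  rw [← gridTail_eq_sum_range hh, Nat.cast_add_one] at hgrid
  exact hgrid.trans <| mul_le_mul_of_nonneg_left
    (ENNReal.toReal_mono hφ (eVariationOn.mono φ (Set.subset_univ _))) hh.le

theorem abs_gridTail_sub_integral_le (hh : 0 < h) (hφ : BoundedVariationOn φ Set.univ) {x₀ : ℝ}
    (hx₀ : φ x₀ = 0) {s : ℝ} (hs0 : 0 ≤ s) (hsn : s ≤ h * (n + 1)) :
    |gridTail h n φ s - ∫ x in s..h * (n + 1), φ x| ≤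
      2 * h * (eVariationOn φ Set.univ).toReal := by
  set V := (eVariationOn φ Set.univ).toReal
  set k₀ := ⌈s / h⌉₊
  have hint (a b : ℝ) : IntervalIntegrable φ volume a b :=
    intervalIntegrable_of_boundedVariationOn (hφ.mono (Set.subset_univ _))
  have hfirst : |∫ x in s..h * k₀, φ x| ≤ h * V := by
    have hbound (x : ℝ) : ‖φ x‖ ≤ V := by
      simpa [hx₀] using hφ.dist_le (Set.mem_univ x) (Set.mem_univ x₀)
    have hsk : s ≤ h * k₀ := (div_le_iff₀' hh).1 (Nat.le_ceil _)
    have hks : h * k₀ ≤ h * (s / h + 1) :=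
      mul_le_mul_of_nonneg_left (Nat.ceil_lt_add_one (div_nonneg hs0 hh.le)).le hh.le
    rw [mul_add, mul_div_cancel₀ _ hh.ne', mul_one] at hks
    refine (intervalIntegral.norm_integral_le_of_norm_le_const fun x _ => hbound x).trans ?_
    rw [abs_of_nonneg (sub_nonneg.2 hsk), mul_comm]
    exact mul_le_mul_of_nonneg_right (by linarith) ENNReal.toReal_nonneg
  calc |gridTail h n φ s - ∫ x in s..h * (n + 1), φ x|
      = |(gridTail h n φ s - ∫ x in h * k₀..h * (n + 1), φ x) - ∫ x in s..h * k₀, φ x| := by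
        rw [← intervalIntegral.integral_add_adjacent_intervals (hint s (h * k₀)) (hint _ _)]
        congr 1; ring
    _ ≤ h * V + h * V := (abs_sub _ _).trans
        (add_le_add (abs_gridTail_sub_integral_ceil_le hh hφ hsn) hfirst)
    _ = 2 * h * V := by ring

variable {Ω Ω' : Type*} [MeasurableSpace Ω] [MeasurableSpace Ω'] {μ : Measure Ω} {ν : Measure Ω'}
  {ψ : ℝ → ℝ}

theorem integral_gridSum_mul_gridSum {A : ℕ → Ω → ℝ} (hA : ∀ j ≤ n, MemLp (A j) 2 μ) :
    ∫ ω, gridSum h n φ (A · ω) * gridSum h n ψ (A · ω) ∂μ =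
      h ^ 2 * ∑ j ∈ Finset.range (n + 1), ∑ l ∈ Finset.range (n + 1),
        φ (h * j) * ψ (h * l) * ∫ ω, A j ω * A l ω ∂μ := by
  have hexpand (ω : Ω) : gridSum h n φ (A · ω) * gridSum h n ψ (A · ω) =
      h ^ 2 * ∑ j ∈ Finset.range (n + 1), ∑ l ∈ Finset.range (n + 1),
        φ (h * j) * ψ (h * l) * (A j ω * A l ω) := by
    rw [gridSum, gridSum, mul_mul_mul_comm, ← sq, Finset.sum_mul_sum]
    simp only [mul_mul_mul_comm]
  have hint (j : ℕ) (hj : j ∈ Finset.range (n + 1)) (l : ℕ) (hl : l ∈ Finset.range (n + 1)) :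
      Integrable (fun ω => φ (h * j) * ψ (h * l) * (A j ω * A l ω)) μ :=
    ((hA j (Finset.mem_range_succ_iff.1 hj)).integrable_mul
      (hA l (Finset.mem_range_succ_iff.1 hl))).const_mul _
  simp only [hexpand, integral_const_mul]
  rw [integral_finsetSum _ fun j hj => integrable_finsetSum _ (hint j hj)]
  congr 1
  refine Finset.sum_congr rfl fun j hj => ?_
  rw [integral_finsetSum _ (hint j hj)]
  simp only [integral_const_mul]

theorem integral_gridSum_mul_gridSum_congr {A : ℕ → Ω → ℝ} {B : ℕ → Ω' → ℝ}
    (hA : ∀ j ≤ n, MemLp (A j) 2 μ) (hB : ∀ j ≤ n, MemLp (B j) 2 ν) {r : ℝ}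
    (hAB : ∀ j l, j ≤ n → l ≤ n → ∫ ω, A j ω * A l ω ∂μ = r * ∫ ω, B j ω * B l ω ∂ν) :
    ∫ ω, gridSum h n φ (A · ω) * gridSum h n ψ (A · ω) ∂μ =
      r * ∫ ω, gridSum h n φ (B · ω) * gridSum h n ψ (B · ω) ∂ν := by
  rw [integral_gridSum_mul_gridSum hA, integral_gridSum_mul_gridSum hB, mul_left_comm]
  simp only [Finset.mul_sum]
  refine Finset.sum_congr rfl fun j hj => Finset.sum_congr rfl fun l hl => ?_
  rw [hAB j l (Finset.mem_range_succ_iff.1 hj) (Finset.mem_range_succ_iff.1 hl)]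
  ring

theorem integral_indicator_Iic_mul_indicator_Iic {x y T : ℝ} (hx : x ∈ Set.Icc 0 T)
    (hy : y ∈ Set.Icc 0 T) :
    ∫ s in (0 : ℝ)..T, (Set.Iic x).indicator 1 s * (Set.Iic y).indicator (1 : ℝ → ℝ) s =
      min x y := by
  have hprod (s : ℝ) : (Set.Iic x).indicator 1 s * (Set.Iic y).indicator (1 : ℝ → ℝ) s =
      (Set.Iic (min x y)).indicator 1 s := by
    rw [← Set.Iic_inter_Iic, Set.inter_indicator_one, Pi.mul_apply]
  have hset : Set.Ioc 0 T ∩ Set.Iic (min x y) = Set.Ioc 0 (min x y) := by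
    rw [Set.Ioc_inter_Iic, inf_of_le_right (min_le_of_left_le hx.2)]
  simp only [hprod]
  rw [intervalIntegral.integral_of_le (hx.1.trans hx.2), setIntegral_indicator measurableSet_Iic,
    hset]
  simp [le_min hx.1 hy.1]

theorem integral_gridSum_mul_gridSum_of_brownian_covariance (hh : 0 < h) {W : ℕ → Ω → ℝ}
    {κ : ℝ} (hW : ∀ j ≤ n, MemLp (W j) 2 μ)
    (hcov : ∀ j l, j ≤ n → l ≤ n → ∫ ω, W j ω * W l ω ∂μ = κ * (min j l : ℝ)) :
    ∫ ω, gridSum h n φ (W · ω) * gridSum h n ψ (W · ω) ∂μ =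
      κ / h * ∫ s in (0 : ℝ)..h * n, gridTail h n φ s * gridTail h n ψ s := by
  have hgrid (j : ℕ) (hj : j ≤ n) : h * j ∈ Set.Icc 0 (h * n) := ⟨by positivity, by gcongr⟩
  rw [intervalIntegral.integral_of_le (by positivity)]
  refine integral_gridSum_mul_gridSum_congr (B := fun j => (Set.Iic (h * j)).indicator 1) hW
    (fun j _ => memLp_indicator_const 2 measurableSet_Iic 1 (.inr (measure_ne_top _ _)))
    fun j l hj hl => ?_
  rw [hcov j l hj hl, ← intervalIntegral.integral_of_le (by positivity),
    integral_indicator_Iic_mul_indicator_Iic (hgrid j hj) (hgrid l hl),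
    ← mul_min_of_nonneg _ _ hh.le]
  field_simp

theorem measurable_gridTail : Measurable (gridTail h n φ) :=
  (Finset.measurable_sum _ fun _ _ =>
    (measurable_one.indicator measurableSet_Iic).const_mul _).const_mul h

end GridSum

theorem abs_integral_mul_sub_integral_mul_le {X : Type*} [MeasurableSpace X] {μ : Measure X}
    [IsFiniteMeasure μ] {f g v w : X → ℝ} {ε : ℝ}
    (hf : AEStronglyMeasurable f μ) (hg : AEStronglyMeasurable g μ)
    (hv : Integrable v μ) (hw : Integrable w μ) (hvw : Integrable (fun x => v x * w x) μ)
    (hfv : ∀ᵐ x ∂μ, |f x - v x| ≤ ε) (hgw : ∀ᵐ x ∂μ, |g x - w x| ≤ ε) :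
    |∫ x, f x * g x ∂μ - ∫ x, v x * w x ∂μ| ≤
      ε * (∫ x, |v x| ∂μ + ∫ x, |w x| ∂μ) + ε ^ 2 * μ.real Set.univ := by
  have hbound : ∀ᵐ x ∂μ, ‖f x * g x - v x * w x‖ ≤ ε * (|v x| + |w x|) + ε ^ 2 := by
    filter_upwards [hfv, hgw] with x hfvx hgwx
    have hε : 0 ≤ ε := (abs_nonneg _).trans hfvx
    calc |f x * g x - v x * w x|
        = |(f x - v x) * (g x - w x) + (f x - v x) * w x + v x * (g x - w x)| := by ring_nf
      _ ≤ |f x - v x| * |g x - w x| + |f x - v x| * |w x| + |v x| * |g x - w x| := by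
        simpa only [abs_mul] using
          abs_add_three ((f x - v x) * (g x - w x)) ((f x - v x) * w x) (v x * (g x - w x))
      _ ≤ ε * ε + ε * |w x| + |v x| * ε := by gcongr
      _ = ε * (|v x| + |w x|) + ε ^ 2 := by ring
  have hsum : Integrable (fun x => ε * (|v x| + |w x|)) μ := (hv.abs.add hw.abs).const_mul ε
  have hboundInt : Integrable (fun x => ε * (|v x| + |w x|) + ε ^ 2) μ :=
    hsum.add (integrable_const _)
  have hdiff : Integrable (fun x => f x * g x - v x * w x) μ :=
    hboundInt.mono' ((hf.mul hg).sub hvw.1) hbound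
  have hfg : Integrable (fun x => f x * g x) μ :=
    (hdiff.add hvw).congr (.of_forall fun _ => sub_add_cancel _ _)
  rw [← integral_sub hfg hvw]
  refine (norm_integral_le_of_norm_le hboundInt hbound).trans_eq ?_
  rw [integral_add hsum (integrable_const _), integral_const_mul,
    integral_add hv.abs hw.abs, integral_const, smul_eq_mul, mul_comm (μ.real _)]

section BigLam

/-- The pre-average function `lam`, defined on `[0, 2]`, extended by zero to `ℝ`. -/
noncomputable def zeroExtension (lam : ℝ → ℝ) : ℝ → ℝ := (Set.Icc 0 2).indicator lam

/-- The total variation over `ℝ` of the extension of `lam` by zero; it controls all Riemann sum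
errors. The value is `0` when the variation is infinite. -/
noncomputable def zeroExtensionVariation (lam : ℝ → ℝ) : ℝ :=
  (eVariationOn (zeroExtension lam) Set.univ).toReal

variable {lam : ℝ → ℝ}

theorem boundedVariationOn_zeroExtension (hbv : BoundedVariationOn lam (Set.Icc 0 2)) :
    BoundedVariationOn (zeroExtension lam) Set.univ :=
  boundedVariationOn_indicator_Icc zero_le_two hbv

theorem intervalIntegrable_zeroExtension (hbv : BoundedVariationOn lam (Set.Icc 0 2)) (a b : ℝ) :
    IntervalIntegrable (zeroExtension lam) volume a b :=
  intervalIntegrable_of_boundedVariationOn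
    ((boundedVariationOn_zeroExtension hbv).mono (Set.subset_univ _))

theorem zeroExtension_two_sub (hanti : ∀ t ∈ Set.Icc (0 : ℝ) 1, lam t = -lam (2 - t)) (t : ℝ) :
    zeroExtension lam (2 - t) = -zeroExtension lam t := by
  by_cases ht : t ∈ Set.Icc (0 : ℝ) 2
  · have ht' : 2 - t ∈ Set.Icc (0 : ℝ) 2 := ⟨by linarith [ht.2], by linarith [ht.1]⟩
    rw [zeroExtension, Set.indicator_of_mem ht, Set.indicator_of_mem ht']
    rcases le_total t 1 with h1 | h1
    · rw [hanti t ⟨ht.1, h1⟩, neg_neg]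
    · rw [hanti (2 - t) ⟨ht'.1, by linarith⟩, sub_sub_cancel]
  · have ht' : 2 - t ∉ Set.Icc (0 : ℝ) 2 := fun h => ht ⟨by linarith [h.2], by linarith [h.1]⟩
    rw [zeroExtension, Set.indicator_of_notMem ht, Set.indicator_of_notMem ht', neg_zero]

theorem bigLam_zeroExtension_of_mem {u : ℝ} (hu : u ∈ Set.Icc (0 : ℝ) 2) :
    bigLam (zeroExtension lam) u = bigLam lam u := by
  rw [bigLam, bigLam, intervalIntegral.integral_congr]
  intro v hv
  rw [Set.uIcc_of_le hu.1] at hv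
  exact Set.indicator_of_mem (Set.Icc_subset_Icc_right hu.2 hv) lam

theorem bigLam_zeroExtension_of_nonpos {u : ℝ} (hu : u ≤ 0) :
    bigLam (zeroExtension lam) u = 0 := by
  have hnull : volume (Set.Ioc u 0 ∩ Set.Icc 0 2) = 0 :=
    measure_mono_null (fun x hx => le_antisymm hx.1.2 hx.2.1) (measure_singleton 0)
  rw [bigLam, intervalIntegral.integral_of_ge hu, zeroExtension,
    setIntegral_indicator measurableSet_Icc, setIntegral_measure_zero _ hnull, neg_zero, neg_zero]

theorem bigLam_sub_bigLam {f : ℝ → ℝ} (hf : ∀ a b, IntervalIntegrable f volume a b) (a b : ℝ) :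
    bigLam f a - bigLam f b = ∫ x in a..b, f x := by
  rw [bigLam, bigLam, ← intervalIntegral.integral_interval_sub_left (hf 0 b) (hf 0 a)]
  ring

theorem continuous_bigLam {f : ℝ → ℝ} (hf : ∀ a b, IntervalIntegrable f volume a b) :
    Continuous (bigLam f) :=
  (intervalIntegral.continuous_primitive hf 0).neg

theorem bigLam_two_sub {f : ℝ → ℝ} (hf : ∀ a b, IntervalIntegrable f volume a b)
    (hanti : ∀ t, f (2 - t) = -f t) (u : ℝ) : bigLam f (2 - u) = bigLam f u := by
  have hreflect (u : ℝ) : bigLam f (2 - u) = bigLam f u - bigLam f 2 := by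
    have hsub := intervalIntegral.integral_comp_sub_left f 2 (a := u) (b := 2)
    simp only [hanti, intervalIntegral.integral_neg, sub_self] at hsub
    rw [bigLam_sub_bigLam hf, bigLam, ← hsub, neg_neg]
  have htwo : bigLam f 2 = 0 := by
    have h0 : bigLam f 0 = 0 := by simp [bigLam]
    have := hreflect 0
    rw [sub_zero, h0] at this
    linarith
  rw [hreflect, htwo, sub_zero]

theorem bigLam_zeroExtension_of_two_le (hbv : BoundedVariationOn lam (Set.Icc 0 2))
    (hanti : ∀ t ∈ Set.Icc (0 : ℝ) 1, lam t = -lam (2 - t)) {u : ℝ} (hu : 2 ≤ u) :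
    bigLam (zeroExtension lam) u = 0 := by
  rw [← bigLam_two_sub (intervalIntegrable_zeroExtension hbv) (zeroExtension_two_sub hanti)]
  exact bigLam_zeroExtension_of_nonpos (by linarith)

theorem integrable_bigLam_zeroExtension (hbv : BoundedVariationOn lam (Set.Icc 0 2))
    (hanti : ∀ t ∈ Set.Icc (0 : ℝ) 1, lam t = -lam (2 - t)) :
    Integrable (bigLam (zeroExtension lam)) := by
  refine (continuous_bigLam (intervalIntegrable_zeroExtension hbv)).integrable_of_hasCompactSupport
    (HasCompactSupport.intro (K := Set.Icc 0 2) isCompact_Icc fun u hu => ?_)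
  rcases lt_or_ge u 0 with hu0 | hu0
  · exact bigLam_zeroExtension_of_nonpos hu0.le
  · exact bigLam_zeroExtension_of_two_le hbv hanti (not_le.1 fun h => hu ⟨hu0, h⟩).le

theorem integral_bigLam_zeroExtension_mul_shift (hbv : BoundedVariationOn lam (Set.Icc 0 2))
    (hanti : ∀ t ∈ Set.Icc (0 : ℝ) 1, lam t = -lam (2 - t)) {a T : ℝ} (ha : -1 ≤ a)
    (haT : a + 2 ≤ T) :
    ∫ s in (0 : ℝ)..T, bigLam (zeroExtension lam) (s - a) *
        bigLam (zeroExtension lam) (s - (a + 1)) =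
      ∫ u in (0 : ℝ)..1, bigLam lam u * bigLam lam (1 - u) := by
  set V := bigLam (zeroExtension lam)
  have hsupp : Function.support (fun s => V (s - a) * V (s - (a + 1))) ⊆
      Set.Ioc (a + 1) (a + 2) := fun s hs => by
    by_contra hs'
    rcases le_or_gt s (a + 1) with h | h
    · exact hs (mul_eq_zero_of_right _ (bigLam_zeroExtension_of_nonpos (by linarith)))
    · refine hs (mul_eq_zero_of_left (bigLam_zeroExtension_of_two_le hbv hanti ?_) _)
      linarith [not_le.1 fun h' => hs' ⟨h, h'⟩]
  calc ∫ s in (0 : ℝ)..T, V (s - a) * V (s - (a + 1))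
      = ∫ s in a + 1..a + 2, V (s - a) * V (s - (a + 1)) := by
        rw [intervalIntegral.integral_eq_integral_of_support_subset hsupp,
          intervalIntegral.integral_eq_integral_of_support_subset
            (hsupp.trans (Set.Ioc_subset_Ioc (by linarith) haT))]
    _ = ∫ u in (0 : ℝ)..1, V (2 - u) * V (1 - u) := by
        have hsub := intervalIntegral.integral_comp_sub_left
          (fun s => V (s - a) * V (s - (a + 1))) (a + 2) (a := 0) (b := 1)
        rw [sub_zero, show a + 2 - 1 = a + 1 by ring] at hsub
        rw [← hsub]
        ring_nf
    _ = ∫ u in (0 : ℝ)..1, bigLam lam u * bigLam lam (1 - u) := by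
        refine intervalIntegral.integral_congr fun u hu => ?_
        rw [Set.uIcc_of_le zero_le_one] at hu
        simp only [V, bigLam_two_sub (intervalIntegrable_zeroExtension hbv)
          (zeroExtension_two_sub hanti)]
        rw [bigLam_zeroExtension_of_mem ⟨hu.1, by linarith [hu.2]⟩,
          bigLam_zeroExtension_of_mem ⟨by linarith [hu.2], by linarith [hu.1]⟩]

theorem abs_gridTail_sub_bigLam_le (hbv : BoundedVariationOn lam (Set.Icc 0 2))
    (hanti : ∀ t ∈ Set.Icc (0 : ℝ) 1, lam t = -lam (2 - t)) {h : ℝ} (hh : 0 < h) {n : ℕ}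
    {a s : ℝ} (hs0 : 0 ≤ s) (hsn : s ≤ h * (n + 1)) (han : a + 2 ≤ h * (n + 1)) :
    |gridTail h n (fun x => zeroExtension lam (x - a)) s - bigLam (zeroExtension lam) (s - a)| ≤
      2 * h * zeroExtensionVariation lam := by
  have hint := intervalIntegrable_zeroExtension hbv
  have hshift : eVariationOn (fun x => zeroExtension lam (x - a)) Set.univ ≤
      eVariationOn (zeroExtension lam) Set.univ :=
    eVariationOn.comp_le_of_monotoneOn _ (fun x => x - a)
      (fun x _ y _ hxy => sub_le_sub_right hxy a) fun _ _ => Set.mem_univ _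
  have hV : bigLam (zeroExtension lam) (s - a) =
      ∫ x in s..h * (n + 1), zeroExtension lam (x - a) := by
    rw [intervalIntegral.integral_comp_sub_right (zeroExtension lam), ← bigLam_sub_bigLam hint,
      bigLam_zeroExtension_of_two_le hbv hanti (le_sub_iff_add_le'.2 han), sub_zero]
  have hleft : zeroExtension lam (a - 1 - a) = 0 :=
    Set.indicator_of_notMem (fun h => by linarith [h.1]) lam
  have hfin := boundedVariationOn_zeroExtension hbv
  rw [hV]
  refine (abs_gridTail_sub_integral_le hh (ne_top_of_le_ne_top hfin hshift) hleft hs0 hsn).trans ?_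
  exact mul_le_mul_of_nonneg_left (ENNReal.toReal_mono hfin hshift) (by positivity)

end BigLam

section PreAverage

variable {Ω : Type*} {lam : ℝ → ℝ}

theorem preAvg_eq_gridSum {n m : ℕ} (hm : 0 < m) (A : ℕ → Ω → ℝ) (i : ℕ) (ω : Ω) :
    preAvg lam n m A i ω =
      gridSum (m / n) n (fun x => zeroExtension lam (x - ((i : ℝ) - 2))) (A · ω) := by
  have hmem (j : ℕ) : ((i : ℝ) - 2) / m ≤ (j : ℝ) / n ∧ (j : ℝ) / n ≤ (i : ℝ) / m ↔
      (m : ℝ) / n * j - (i - 2) ∈ Set.Icc (0 : ℝ) 2 := by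
    have hm' : (0 : ℝ) < m := by exact_mod_cast hm
    rw [Set.mem_Icc, div_le_iff₀' hm', le_div_iff₀' hm', div_mul_eq_mul_div, mul_div_assoc]
    constructor <;> rintro ⟨h₁, h₂⟩ <;> constructor <;> linarith
  simp only [preAvg, gridSum, blockIdx, Finset.sum_filter, zeroExtension, Set.indicator_apply,
    hmem, ite_mul, zero_mul, mul_div_right_comm]

theorem mOf_sq_le {c : ℝ} (hc : 0 < c) (n : ℕ) : (mOf c n : ℝ) ^ 2 ≤ 4 * c ^ 2 * n := by
  set k := ⌊√n / c⌋₊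
  rcases k.eq_zero_or_pos with hk | hk
  · -- Here `mOf c n` is the junk value `n / 0 = 0`.
    have : mOf c n = 0 := by rw [mOf, show ⌊√n / c⌋₊ = 0 from hk, Nat.div_zero]
    rw [this, Nat.cast_zero, zero_pow two_ne_zero]
    positivity
  have hk' : (1 : ℝ) ≤ k := by exact_mod_cast hk
  have hsqrt : √n ≤ 2 * c * k := by
    have := (Nat.lt_floor_add_one (√n / c)).le
    rw [div_le_iff₀ hc] at this
    nlinarith
  have hm : (mOf c n : ℝ) ≤ 2 * c * √n := by
    calc (mOf c n : ℝ) ≤ n / k := Nat.cast_div_le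
      _ ≤ 2 * c * √n := by
        rw [div_le_iff₀ (by linarith)]
        nlinarith [Real.mul_self_sqrt (n.cast_nonneg : (0 : ℝ) ≤ n), Real.sqrt_nonneg n]
  calc (mOf c n : ℝ) ^ 2 ≤ (2 * c * √n) ^ 2 := by gcongr
    _ = 4 * c ^ 2 * n := by rw [mul_pow, Real.sq_sqrt n.cast_nonneg]; ring

theorem IsSimplifiedModel.memLp_two [MeasureSpace Ω] {n : ℕ} {W η : ℕ → Ω → ℝ}
    (hmodel : IsSimplifiedModel n W η) {j : ℕ} (hj : j ≤ n) : MemLp (W j) 2 := by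
  obtain ⟨hW, -, hgauss, -⟩ := hmodel
  obtain ⟨v, hv⟩ := hgauss (Pi.single j 1) 0
  have hsum : (fun ω => ∑ k ∈ Finset.range (n + 1),
      ((Pi.single j 1 : ℕ → ℝ) k * W k ω + (0 : ℕ → ℝ) k * η k ω)) = W j := by
    ext ω
    simp [Pi.single_apply, Finset.sum_ite_eq', hj]
  have hid : MemLp id 2 (gaussianReal 0 v) := memLp_id_gaussianReal' 2 ENNReal.ofNat_ne_top
  rw [hsum] at hv
  rw [← hv] at hid
  exact (memLp_map_measure_iff aestronglyMeasurable_id (hW j).aemeasurable).1 hid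

end PreAverage

section Covariance

variable {lam : ℝ → ℝ}

theorem abs_integral_gridTail_mul_gridTail_sub_le (hbv : BoundedVariationOn lam (Set.Icc 0 2))
    (hanti : ∀ t ∈ Set.Icc (0 : ℝ) 1, lam t = -lam (2 - t)) {h : ℝ} (hh : 0 < h) {n : ℕ} {a : ℝ}
    (ha : -1 ≤ a) (han : a + 3 ≤ h * n) :
    |(∫ s in (0 : ℝ)..h * n, gridTail h n (fun x => zeroExtension lam (x - a)) s *
          gridTail h n (fun x => zeroExtension lam (x - (a + 1))) s) -
        ∫ u in (0 : ℝ)..1, bigLam lam u * bigLam lam (1 - u)| ≤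
      2 * (2 * h * zeroExtensionVariation lam) * (∫ u, |bigLam (zeroExtension lam) u|) +
        (2 * h * zeroExtensionVariation lam) ^ 2 * (h * n) := by
  set ε := 2 * h * zeroExtensionVariation lam
  have hT : 0 ≤ h * n := by positivity
  have hlast : h * n ≤ h * (n + 1) := by linarith
  have hcont := continuous_bigLam (intervalIntegrable_zeroExtension hbv)
  have hV := integrable_bigLam_zeroExtension hbv hanti
  rw [← integral_bigLam_zeroExtension_mul_shift hbv hanti ha (by linarith : a + 2 ≤ h * n),
    intervalIntegral.integral_of_le hT, intervalIntegral.integral_of_le hT]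
  set μ := volume.restrict (Set.Ioc 0 (h * n))
  have happrox (b : ℝ) (hb : b + 2 ≤ h * n) : ∀ᵐ s ∂μ,
      |gridTail h n (fun x => zeroExtension lam (x - b)) s -
        bigLam (zeroExtension lam) (s - b)| ≤ ε := by
    filter_upwards [ae_restrict_mem measurableSet_Ioc] with s hs
    exact abs_gridTail_sub_bigLam_le hbv hanti hh hs.1.le (hs.2.trans hlast) (hb.trans hlast)
  have hshift (b : ℝ) : Integrable (fun s => bigLam (zeroExtension lam) (s - b)) μ :=
    (hV.comp_sub_right b).restrict
  have hL1 (b : ℝ) : ∫ s, |bigLam (zeroExtension lam) (s - b)| ∂μ ≤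
      ∫ u, |bigLam (zeroExtension lam) u| :=
    (setIntegral_le_integral (hV.comp_sub_right b).abs (.of_forall fun _ => abs_nonneg _)).trans_eq
      (integral_sub_right_eq_self (fun u => |bigLam (zeroExtension lam) u|) b)
  have hprod : Integrable (fun s => bigLam (zeroExtension lam) (s - a) *
      bigLam (zeroExtension lam) (s - (a + 1))) μ :=
    ((by fun_prop : Continuous _).intervalIntegrable 0 (h * n)).1
  have hvol : μ.real Set.univ = h * n := by simp [μ, hT]
  have hε : 0 ≤ ε := mul_nonneg (by positivity) ENNReal.toReal_nonneg
  refine (abs_integral_mul_sub_integral_mul_le measurable_gridTail.aestronglyMeasurable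
    measurable_gridTail.aestronglyMeasurable (hshift a) (hshift (a + 1)) hprod
    (happrox a (by linarith)) (happrox (a + 1) (by linarith))).trans ?_
  rw [hvol]
  nlinarith [hL1 a, hL1 (a + 1)]

theorem abs_integral_preAvg_mul_preAvg_sub_le (hbv : BoundedVariationOn lam (Set.Icc 0 2))
    (hanti : ∀ t ∈ Set.Icc (0 : ℝ) 1, lam t = -lam (2 - t)) {Ω : Type*} [MeasurableSpace Ω]
    {μ : Measure Ω} {σ : ℝ} {n m : ℕ} (hn : 0 < n) {W : ℕ → Ω → ℝ} (hW : ∀ j ≤ n, MemLp (W j) 2 μ)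
    (hcov : ∀ j l, j ≤ n → l ≤ n → ∫ ω, W j ω * W l ω ∂μ = (min j l : ℝ) / n)
    {i : ℕ} (hi : 2 ≤ i) (him : i + 1 ≤ m) :
    |(∫ ω, preAvg lam n m (fun j ω => σ * W j ω) i ω *
          preAvg lam n m (fun j ω => σ * W j ω) (i + 1) ω ∂μ)
        - (σ ^ 2 / m) * ∫ u in (0:ℝ)..1, bigLam lam u * bigLam lam (1 - u)| ≤
      4 * σ ^ 2 * (zeroExtensionVariation lam * (∫ u, |bigLam (zeroExtension lam) u|) +
        zeroExtensionVariation lam ^ 2 * ((m : ℝ) ^ 2 / n)) / n := by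
  have hm : 0 < m := by lia
  have hnR : (0 : ℝ) < n := by exact_mod_cast hn
  have hmn : (m : ℝ) / n * n = m := div_mul_cancel₀ _ hnR.ne'
  have hσcov (j l : ℕ) (hj : j ≤ n) (hl : l ≤ n) :
      ∫ ω, σ * W j ω * (σ * W l ω) ∂μ = σ ^ 2 / n * (min j l : ℝ) := by
    simp only [mul_mul_mul_comm σ, integral_const_mul, hcov j l hj hl]
    ring
  have hisometry : ∫ ω, preAvg lam n m (fun j ω => σ * W j ω) i ω *
      preAvg lam n m (fun j ω => σ * W j ω) (i + 1) ω ∂μ =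
      σ ^ 2 / m * ∫ s in (0 : ℝ)..m / n * n,
        gridTail (m / n) n (fun x => zeroExtension lam (x - ((i : ℝ) - 2))) s *
          gridTail (m / n) n (fun x => zeroExtension lam (x - ((i : ℝ) - 2 + 1))) s := by
    simp only [preAvg_eq_gridSum hm, Nat.cast_add_one, add_sub_right_comm]
    rw [integral_gridSum_mul_gridSum_of_brownian_covariance (by positivity)
      (fun j hj => (hW j hj).const_mul σ) hσcov, div_div, mul_div_cancel₀ _ hnR.ne']
  have hiR : (2 : ℝ) ≤ i := by exact_mod_cast hi
  have himR : (i : ℝ) + 1 ≤ m := by exact_mod_cast him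
  have herror := abs_integral_gridTail_mul_gridTail_sub_le hbv hanti
    (by positivity : (0 : ℝ) < m / n) (n := n) (a := i - 2) (by linarith) (by linarith)
  rw [hisometry, ← mul_sub, abs_mul, abs_of_nonneg (by positivity : 0 ≤ σ ^ 2 / (m : ℝ))]
  refine (mul_le_mul_of_nonneg_left herror (by positivity)).trans_eq ?_
  field_simp
  ring

end Covariance

theorem preAveragedBM_adjacent_covariance_general (σ c : ℝ) (hc : 0 < c) {lam : ℝ → ℝ}
    (hbv : BoundedVariationOn lam (Set.Icc 0 2))
    (hanti : ∀ t ∈ Set.Icc (0 : ℝ) 1, lam t = -lam (2 - t)) :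
    ∃ C > 0, ∀ (n : ℕ) {Ω : Type*} [MeasurableSpace Ω] (μ : Measure Ω) (W : ℕ → Ω → ℝ),
      (∀ j ≤ n, MemLp (W j) 2 μ) →
      (∀ j l, j ≤ n → l ≤ n → ∫ ω, W j ω * W l ω ∂μ = (min j l : ℝ) / n) →
      ∀ i : ℕ, 2 ≤ i → i + 1 ≤ mOf c n →
        |(∫ ω, preAvg lam n (mOf c n) (fun j ω => σ * W j ω) i ω *
              preAvg lam n (mOf c n) (fun j ω => σ * W j ω) (i + 1) ω ∂μ)
            - (σ ^ 2 / (mOf c n : ℝ)) *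
                ∫ u in (0:ℝ)..1, bigLam lam u * bigLam lam (1 - u)| ≤ C / n := by
  set V := zeroExtensionVariation lam
  set L := ∫ u, |bigLam (zeroExtension lam) u|
  have hVL : 0 ≤ V * L := mul_nonneg ENNReal.toReal_nonneg (integral_nonneg fun _ => abs_nonneg _)
  refine ⟨4 * σ ^ 2 * (V * L + V ^ 2 * (4 * c ^ 2)) + 1, by positivity, ?_⟩
  intro n Ω _ μ W hW hcov i hi him
  have hn : 0 < n := Nat.pos_of_ne_zero fun h => by simp [mOf, h] at him
  have hmn : (mOf c n : ℝ) ^ 2 / n ≤ 4 * c ^ 2 :=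
    (div_le_iff₀ (by exact_mod_cast hn)).2 (mOf_sq_le hc n)
  refine (abs_integral_preAvg_mul_preAvg_sub_le hbv hanti hn hW hcov hi him).trans ?_
  gcongr
  exact (by gcongr : _ ≤ 4 * σ ^ 2 * (V * L + V ^ 2 * (4 * c ^ 2))).trans (by linarith)

theorem preAveragedBM_adjacent_covariance (σ τ c : ℝ) (hσ : 0 < σ) (hτ : 0 < τ) (hc : 0 < c)
    (lam : ℝ → ℝ) (hlam : IsPreAverageFn lam)
    (Ω : ℕ → Type*) [∀ n, MeasureSpace (Ω n)] [∀ n, IsProbabilityMeasure (ℙ : Measure (Ω n))]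
    (W η : (n : ℕ) → ℕ → Ω n → ℝ)
    (hmodel : ∀ n, IsSimplifiedModel n (W n) (η n)) :
    ∃ C > 0, ∃ N : ℕ, ∀ n ≥ N, ∀ i : ℕ, 2 ≤ i → i + 1 ≤ mOf c n →
      |(∫ ω, preAvg lam n (mOf c n) (fun j ω => σ * W n j ω) i ω *
             preAvg lam n (mOf c n) (fun j ω => σ * W n j ω) (i + 1) ω)
          - (σ ^ 2 / (mOf c n : ℝ)) *
              ∫ u in (0:ℝ)..1, bigLam lam u * bigLam lam (1 - u)| ≤ C / n := by
  obtain ⟨C, hC, hbound⟩ := preAveragedBM_adjacent_covariance_general σ c hc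
    hlam.boundedVariationOn hlam.antisymm
  exact ⟨C, hC, 0, fun n _ => hbound n ℙ (W n) (fun _ => (hmodel n).memLp_two)
    (hmodel n).2.2.2.1⟩
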